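/- If W ∈ X satisfies B(W,W) = 0, then W = 0. (In the proof: Im B(W,W) = 0 forces Ŵ to vanish on the disk |ξ| < k; since W is a compactly supported distribution, Ŵ extends to an entire analytic function on ℂ², hence Ŵ ≡ 0 and W = 0.) -/

import Mathlib

noncomputable section

open MeasureTheory Complex Filter Topology
open scoped Real NNReal ContDiff

/-- The plane `ℝ²`. -/
abbrev R2 : Type := EuclideanSpace ℝ (Fin 2)

/-- Euclidean dot product on `ℝ²`. -/
def rdot (x ξ : R2) : ℝ := x 0 * ξ 0 + x 1 * ξ 1

/-- `testFT φ ξ = ∫ e^{i x·ξ} φ(x) dx`, the (inverse-type) Fourier integral of a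
test function `φ`. -/
def testFT (φ : R2 → ℂ) (ξ : R2) : ℂ :=
  ∫ x : R2, Complex.exp (Complex.I * (rdot x ξ : ℂ)) * φ x

/-- The squared `H^s(ℝ²)` norm of the distribution whose Fourier transform is `F`:
`‖f‖² = (2π)⁻² ∫ (1+|ξ|²)^s |f̂(ξ)|² dξ`. -/
def wnormSq (s : ℝ) (F : R2 → ℂ) : ℝ :=
  ((2 * π) ^ 2)⁻¹ * ∫ ξ : R2, ((1 : ℝ) + ‖ξ‖ ^ 2) ^ s * ‖F ξ‖ ^ 2

/-- The `H^s(ℝ²)` norm (Fourier-side representation). -/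
def wnorm (s : ℝ) (F : R2 → ℂ) : ℝ := Real.sqrt (wnormSq s F)

/-- `F` is the Fourier transform of an element of `H^s(ℝ²)`. -/
def MemHs (s : ℝ) (F : R2 → ℂ) : Prop :=
  AEStronglyMeasurable F (volume : Measure R2) ∧
    Integrable (fun ξ : R2 => ((1 : ℝ) + ‖ξ‖ ^ 2) ^ s * ‖F ξ‖ ^ 2) volume

/-- An element `f` of `H̃^s(Γ)`: a distribution on `ℝ²` of Sobolev regularity `s`
supported in the closure of `Γ`, represented by its Fourier transform `ft`
(a continuous function, `f` being a compactly supported distribution).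
The support condition is expressed by testing against smooth compactly supported
functions `φ` whose support avoids `closure Γ`, via the Parseval pairing
`∫ f φ dx = (2π)⁻² ∫ f̂(ξ) φ̌(ξ) dξ` with `φ̌(ξ) = ∫ e^{ix·ξ} φ(x) dx`. -/
structure HTildeElt (s : ℝ) (Γ : Set R2) where
  ft : R2 → ℂ
  cont : Continuous ft
  mem : Integrable (fun ξ : R2 => ((1 : ℝ) + ‖ξ‖ ^ 2) ^ s * ‖ft ξ‖ ^ 2) volume
  supp : ∀ φ : R2 → ℂ, ContDiff ℝ ∞ φ → HasCompactSupport φ →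
    tsupport φ ∩ closure Γ = ∅ → (∫ ξ : R2, ft ξ * testFT φ ξ) = 0

/-- `Γ` is a bounded Lipschitz domain in `ℝ²`: a nonempty bounded open set whose
boundary is locally, after a rigid motion, the graph of a Lipschitz function with
the domain on one side. -/
def IsLipschitzDomain (Γ : Set R2) : Prop :=
  IsOpen Γ ∧ Bornology.IsBounded Γ ∧ Γ.Nonempty ∧
    ∀ x ∈ frontier Γ, ∃ (e : R2 ≃ₗᵢ[ℝ] R2) (L : ℝ≥0) (f : ℝ → ℝ) (U : Set R2),
      LipschitzWith L f ∧ IsOpen U ∧ x ∈ U ∧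
        ∀ y ∈ U, (y ∈ Γ ↔ f (e y 0) < e y 1)

/-- `ξ·V̂(ξ)`, i.e. `-i` times the Fourier transform of `div V`. -/
def dotFt (F1 F2 : R2 → ℂ) (ξ : R2) : ℂ := (ξ 0 : ℂ) * F1 ξ + (ξ 1 : ℂ) * F2 ξ

/-- `ξ⊥·V̂(ξ)`, i.e. `-i` times the Fourier transform of `curl V`. -/
def curlFt (F1 F2 : R2 → ℂ) (ξ : R2) : ℂ := (ξ 1 : ℂ) * F1 ξ - (ξ 0 : ℂ) * F2 ξ

/-- An element of `X = H̃^{-1/2}_div(Γ)`: a pair of elements of `H̃^{-1/2}(Γ)`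
whose distributional divergence also belongs to `H̃^{-1/2}(Γ)`. -/
structure Xelt (Γ : Set R2) where
  c1 : HTildeElt (-(1/2) : ℝ) Γ
  c2 : HTildeElt (-(1/2) : ℝ) Γ
  divMem : Integrable (fun ξ : R2 =>
    ((1 : ℝ) + ‖ξ‖ ^ 2) ^ (-(1/2) : ℝ) * ‖dotFt c1.ft c2.ft ξ‖ ^ 2) volume

/-- The Fourier transform of `div V`. -/
def divFt {Γ : Set R2} (V : Xelt Γ) (ξ : R2) : ℂ :=
  Complex.I * dotFt V.c1.ft V.c2.ft ξ

/-- The squared `H`-norm `‖V‖²_H` of a vector field. -/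
def HnormSq {Γ : Set R2} (V : Xelt Γ) : ℝ :=
  wnormSq (-(1/2)) V.c1.ft + wnormSq (-(1/2)) V.c2.ft

/-- The squared `X`-norm `‖V‖²_X = ‖V‖²_H + ‖div V‖²_{H̃^{-1/2}}`. -/
def XnormSq {Γ : Set R2} (V : Xelt Γ) : ℝ :=
  HnormSq V + wnormSq (-(1/2)) (divFt V)

/-- The `X`-norm. -/
def Xnorm {Γ : Set R2} (V : Xelt Γ) : ℝ := Real.sqrt (XnormSq V)

/-- `ĝ₀(ξ) = i/√(k²-|ξ|²)`, with the branch `√(k²-|ξ|²) = i√(|ξ|²-k²)` for `|ξ| > k`. -/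
def g0hat (k : ℝ) (ξ : R2) : ℂ :=
  if ‖ξ‖ < k then Complex.I / ((Real.sqrt (k ^ 2 - ‖ξ‖ ^ 2) : ℝ) : ℂ)
  else 1 / ((Real.sqrt (‖ξ‖ ^ 2 - k ^ 2) : ℝ) : ℂ)

/-- The integrand of the sesquilinear form `B`:
`ĝ₀(ξ) [ (|ξ|²-k²) a₁ b̄₁ - k² a₂ b̄₂ ]` with `a₁ = ξ·Ŵ/|ξ|`, `a₂ = ξ⊥·Ŵ/|ξ|`, etc. -/
def Bintegrand (k : ℝ) (F1 F2 G1 G2 : R2 → ℂ) (ξ : R2) : ℂ :=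
  g0hat k ξ *
    (((‖ξ‖ ^ 2 - k ^ 2 : ℝ) : ℂ) * (dotFt F1 F2 ξ * starRingEnd ℂ (dotFt G1 G2 ξ)) -
      ((k ^ 2 : ℝ) : ℂ) * (curlFt F1 F2 ξ * starRingEnd ℂ (curlFt G1 G2 ξ))) /
    ((‖ξ‖ ^ 2 : ℝ) : ℂ)

/-- The sesquilinear form `B(W,V)`. -/
def Bform (k : ℝ) {Γ : Set R2} (W V : Xelt Γ) : ℂ :=
  ∫ ξ : R2, Bintegrand k W.c1.ft W.c2.ft V.c1.ft V.c2.ft ξ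

/-- The sesquilinear form `E(q,V) = B(curl⃗ q, V)`, where
`curl⃗ q = (∂q/∂x₂, -∂q/∂x₁)` has Fourier transform `(iξ₂ q̂, -iξ₁ q̂)`. -/
def Eform (k : ℝ) {Γ : Set R2} (q : HTildeElt (1/2 : ℝ) Γ) (V : Xelt Γ) : ℂ :=
  ∫ ξ : R2, Bintegrand k (fun η => Complex.I * (η 1 : ℂ) * q.ft η)
      (fun η => -(Complex.I * (η 0 : ℂ) * q.ft η)) V.c1.ft V.c2.ft ξ

/-- The inner product of the Hilbert space `X`; by the Riesz representation
theorem, every bounded conjugate-linear functional on `X` is `V ↦ Xinner Y V`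
for a unique `Y ∈ X`, with functional norm `Xnorm Y`. -/
def Xinner {Γ : Set R2} (Y V : Xelt Γ) : ℂ :=
  ((((2 * π) ^ 2)⁻¹ : ℝ) : ℂ) * ∫ ξ : R2, ((((1 : ℝ) + ‖ξ‖ ^ 2) ^ (-(1/2) : ℝ) : ℝ) : ℂ) *
    (Y.c1.ft ξ * starRingEnd ℂ (V.c1.ft ξ) + Y.c2.ft ξ * starRingEnd ℂ (V.c2.ft ξ) +
      divFt Y ξ * starRingEnd ℂ (divFt V ξ))

/-- `√(k²-|ξ|²)`, with the branch `i√(|ξ|²-k²)` for `|ξ| > k`. -/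
def rootk (k : ℝ) (ξ : R2) : ℂ :=
  if ‖ξ‖ < k then ((Real.sqrt (k ^ 2 - ‖ξ‖ ^ 2) : ℝ) : ℂ)
  else Complex.I * ((Real.sqrt (‖ξ‖ ^ 2 - k ^ 2) : ℝ) : ℂ)

/-- The Fourier multiplier `i/(2√(k²-|ξ|²))` of the Helmholtz single-layer
operator `T` with kernel `e^{ik|x-y|}/(4π|x-y|)`. -/
def mT (k : ℝ) (ξ : R2) : ℂ := Complex.I / (2 * rootk k ξ)

/-- The Fourier multiplier `1/(2|ξ|)` of the Laplace single-layer operator `T₀`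
with kernel `1/(4π|x-y|)`. -/
def mT0 (ξ : R2) : ℂ := 1 / (2 * ((‖ξ‖ : ℝ) : ℂ))

/-- The Fourier multiplier of `R = T - T₀`. -/
def mR (k : ℝ) (ξ : R2) : ℂ := mT k ξ - mT0 ξ

/-- The distributions with Fourier data `G` and `E` have the same restriction to
the open set `Γ`: `⟨G - E, φ⟩ = 0` for all smooth `φ` compactly supported in `Γ`
(pairing written on the Fourier side). -/
def AgreeOn (Γ : Set R2) (G E : R2 → ℂ) : Prop :=
  ∀ φ : R2 → ℂ, ContDiff ℝ ∞ φ → HasCompactSupport φ → tsupport φ ⊆ Γ →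
    (∫ ξ : R2, (G ξ - E ξ) * testFT φ ξ) = 0

/-- The duality pairing `⟨f, ψ⟩` between `H^{1/2}(Γ)` and `H̃^{-1/2}(Γ)`, written
on the Fourier side (Plancherel): `(2π)⁻² ∫ f̂(ξ) conj(ψ̂(ξ)) dξ`, where `G = f̂`
is the Fourier data of (an extension of) `f`. -/
def dualPair (G ψ : R2 → ℂ) : ℂ :=
  ((((2 * π) ^ 2)⁻¹ : ℝ) : ℂ) * ∫ ξ : R2, G ξ * starRingEnd ℂ (ψ ξ)

/-!
On the diagonal the density of `B` is `ĝ₀ (|ξ·Ŵ|² - k²|Ŵ|²)`, with a real bracket that is at most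
`-(k² - |ξ|²)|Ŵ|²` by Cauchy–Schwarz. Since `Im ĝ₀` is positive inside the disk `|ξ| < k` and zero
outside, `Im B(W,W) = 0` forces `Ŵ` to vanish on the disk.

To propagate this to the whole plane, let `f` be a component of `W` and multiply `f̂` by the
Fourier transform `ρ̌` of a test function. The product is the Fourier transform of a mollification
of `f`, which is an integrable function with compact support: at `x` it is the pairing of `f` with
`ρ(· - x)`, and this vanishes once `supp ρ + x` has left `closure Γ`. Hence `f̂ ρ̌` extends to an
entire function along every line through the center of the disk, so it vanishes identically; at
any given `ξ` one may choose `ρ` with `ρ̌(ξ) ≠ 0`.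
-/

section EntireExtension

open scoped FourierTransform RealInnerProductSpace

variable {E : Type*} [NormedAddCommGroup E] [NormedSpace ℂ E]

lemma differentiable_integral_cexp_mul_smul {α : Type*} [MeasurableSpace α] {μ : Measure α}
    {L : α → ℂ} {u : α → E} {R : ℝ} (hL : AEStronglyMeasurable L μ) (hu : Integrable u μ)
    (hR : ∀ a, u a ≠ 0 → ‖L a‖ ≤ R) :
    Differentiable ℂ fun z : ℂ ↦ ∫ a, cexp (z * L a) • u a ∂μ := by
  have norm_le (r : ℝ) (z : ℂ) (hz : ‖z‖ ≤ r) (a : α) :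
      ‖cexp (z * L a) • u a‖ ≤ Real.exp (r * R) * ‖u a‖ := by
    by_cases ha : u a = 0
    · simp [ha]
    · have hr : 0 ≤ r := (norm_nonneg z).trans hz
      grw [norm_smul, Complex.norm_exp, Complex.re_le_norm, norm_mul, hz, hR a ha]
  have meas (z : ℂ) : AEStronglyMeasurable (fun a ↦ cexp (z * L a) • u a) μ :=
    (Complex.continuous_exp.comp_aestronglyMeasurable (hL.const_mul z)).smul hu.1
  intro z₀
  refine (hasDerivAt_integral_of_dominated_loc_of_deriv_le (s := Metric.ball z₀ 1)
    (F' := fun z a ↦ L a • cexp (z * L a) • u a)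
    (bound := fun a ↦ R * (Real.exp ((‖z₀‖ + 1) * R) * ‖u a‖))
    (Metric.ball_mem_nhds z₀ one_pos) (.of_forall meas)
    ((hu.norm.const_mul _).mono' (meas z₀) (.of_forall (norm_le _ z₀ le_rfl)))
    (hL.smul (meas z₀)) (.of_forall fun a z hz ↦ ?_) ((hu.norm.const_mul _).const_mul _)
    (.of_forall fun a z _ ↦ ?_)).2.differentiableAt
  · by_cases ha : u a = 0
    · simp [ha]
    · have hz' : ‖z‖ ≤ ‖z₀‖ + 1 := by
        linarith [norm_le_norm_add_norm_sub' z z₀, mem_ball_iff_norm.1 hz]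
      rw [norm_smul]
      exact mul_le_mul (hR a ha) (norm_le _ z hz' a) (norm_nonneg _)
        ((norm_nonneg _).trans (hR a ha))
  · simpa [smul_smul, mul_comm] using
      (((hasDerivAt_id z).mul_const (L a)).cexp).smul_const (u a)

variable [CompleteSpace E]

lemma eq_zero_of_differentiable_of_eventually_ofReal {G : ℂ → E} (hG : Differentiable ℂ G)
    (h : ∀ᶠ t : ℝ in 𝓝 0, G t = 0) : G = 0 := by
  have tendsto_ofReal : Tendsto ((↑) : ℝ → ℂ) (𝓝[≠] 0) (𝓝[≠] 0) :=
    (Complex.continuous_ofReal.tendsto' 0 0 rfl).inf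
      (tendsto_principal_principal.2 fun _ ht ↦ Complex.ofReal_ne_zero.2 ht)
  have hfreq : ∃ᶠ z in 𝓝[≠] (0 : ℂ), G z = 0 :=
    tendsto_ofReal.frequently (h.filter_mono nhdsWithin_le_nhds).frequently
  exact AnalyticOnNhd.eq_of_frequently_eq (fun z _ ↦ hG.analyticAt z)
    (fun _ _ ↦ analyticAt_const) hfreq

variable {V : Type*} [NormedAddCommGroup V] [InnerProductSpace ℝ V] [MeasurableSpace V]
  [BorelSpace V] [FiniteDimensional ℝ V]

lemma fourier_eq_zero_of_hasCompactSupport {u : V → E} (hu : Integrable u)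
    (hs : HasCompactSupport u) {ξ₀ : V} (h : 𝓕 u =ᶠ[𝓝 ξ₀] 0) : 𝓕 u = 0 := by
  ext ξ
  set v := ξ - ξ₀ with hv
  have fourier_line (t : ℝ) : 𝓕 u (ξ₀ + t • v) =
      ∫ x, cexp (t * ((-2 * π * ⟪x, v⟫ : ℝ) * I)) • cexp ((-2 * π * ⟪x, ξ₀⟫ : ℝ) * I) • u x := by
    rw [Real.fourier_eq']
    congr 1 with x
    rw [smul_smul, ← Complex.exp_add, inner_add_right, inner_smul_right]
    congr 2
    push_cast
    ring
  obtain ⟨R, hR⟩ := hs.exists_bound_of_continuousOn (f := fun x ↦ ((-2 * π * ⟪x, v⟫ : ℝ) : ℂ) * I)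
    (by fun_prop)
  have entire := differentiable_integral_cexp_mul_smul (μ := (volume : Measure V))
    (L := fun x ↦ ((-2 * π * ⟪x, v⟫ : ℝ) : ℂ) * I)
    (u := fun x ↦ cexp ((-2 * π * ⟪x, ξ₀⟫ : ℝ) * I) • u x)
    (Continuous.aestronglyMeasurable (by fun_prop))
    (hu.bdd_smul 1 (Continuous.aestronglyMeasurable (by fun_prop))
      (.of_forall fun x ↦ (Complex.norm_exp_ofReal_mul_I _).le))
    (fun x hx ↦ hR x (subset_tsupport u (right_ne_zero_of_smul hx)))
  have line_tendsto : Tendsto (fun t : ℝ ↦ ξ₀ + t • v) (𝓝 0) (𝓝 ξ₀) :=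
    Continuous.tendsto' (by fun_prop) _ _ (by simp)
  have line_eq_zero := eq_zero_of_differentiable_of_eventually_ofReal entire
    ((line_tendsto.eventually h).mono fun t ht ↦ (fourier_line t).symm.trans ht)
  rw [← add_sub_cancel ξ₀ ξ, ← hv, ← one_smul ℝ v]
  exact (fourier_line 1).trans (congrFun line_eq_zero _)

lemma eq_zero_of_hasCompactSupport_fourierInv {g : V → E} (hg : Continuous g)
    (hi : Integrable g) (hs : HasCompactSupport (𝓕⁻ g)) {ξ₀ : V} (h : g =ᶠ[𝓝 ξ₀] 0) :
    g = 0 := by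
  have fourierInv_integrable : Integrable (𝓕⁻ g) := by
    refine Continuous.integrable_of_hasCompactSupport ?_ hs
    exact VectorFourier.fourierIntegral_continuous Real.continuous_fourierChar
      (L := -innerₗ V) continuous_inner.neg hi
  have fourier_integrable : Integrable (𝓕 g) := by
    have := fourierInv_integrable.comp_neg
    simpa only [Real.fourierInv_eq_fourier_neg, neg_neg] using this
  have inversion := hg.fourier_fourierInv_eq hi fourier_integrable
  rw [← inversion] at h ⊢
  exact fourier_eq_zero_of_hasCompactSupport fourierInv_integrable hs h

end EntireExtension

section WeightedL2

open scoped SchwartzMap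

variable {V : Type*} [NormedAddCommGroup V] [InnerProductSpace ℝ V] [MeasurableSpace V]
  [BorelSpace V] [FiniteDimensional ℝ V]

lemma integrable_mul_schwartzMap {s : ℝ} {F : V → ℂ} (hF : AEStronglyMeasurable F)
    (hi : Integrable fun ξ ↦ (1 + ‖ξ‖ ^ 2) ^ s * ‖F ξ‖ ^ 2) (ψ : 𝓢(V, ℂ)) :
    Integrable fun ξ ↦ F ξ * ψ ξ := by
  have weight_pos (ξ : V) : 0 < 1 + ‖ξ‖ ^ 2 := by positivity
  have weight_meas (r : ℝ) : Measurable fun ξ : V ↦ (1 + ‖ξ‖ ^ 2) ^ r := by fun_prop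
  have weighted_F : MemLp (fun ξ ↦ (1 + ‖ξ‖ ^ 2) ^ (s / 2) • F ξ) 2 := by
    refine (memLp_two_iff_integrable_sq_norm ((weight_meas _).aestronglyMeasurable.smul hF)).2 ?_
    refine hi.congr (.of_forall fun ξ ↦ ?_)
    simp only [Pi.smul_apply', norm_smul, Real.norm_eq_abs, mul_pow, sq_abs]
    rw [← Real.rpow_mul_natCast (weight_pos ξ).le]
    norm_num
  have weighted_ψ : MemLp (fun ξ ↦ (1 + ‖ξ‖ ^ 2) ^ (-(s / 2)) • ψ ξ) 2 := by
    have := (SchwartzMap.smulLeftCLM ℂ (fun ξ : V ↦ (1 + ‖ξ‖ ^ 2) ^ (-(s / 2))) ψ).memLp 2 volume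
    refine this.ae_eq (.of_forall fun ξ ↦ ?_)
    exact SchwartzMap.smulLeftCLM_apply_apply
      (Function.hasTemperateGrowth_one_add_norm_sq_rpow V _) ψ ξ
  refine (weighted_F.integrable_mul weighted_ψ).congr (.of_forall fun ξ ↦ ?_)
  simp only [Pi.mul_apply, smul_mul_smul_comm]
  rw [← Real.rpow_add (weight_pos ξ), add_neg_cancel, Real.rpow_zero, one_smul]

end WeightedL2

section TestFT

open scoped FourierTransform RealInnerProductSpace SchwartzMap

lemma rdot_eq_inner (x ξ : R2) : rdot x ξ = ⟪x, ξ⟫ := by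
  simp [rdot, PiLp.inner_apply, mul_comm]

lemma fourierInv_eq_testFT (φ : R2 → ℂ) (ξ : R2) : 𝓕⁻ φ ξ = testFT φ ((2 * π) • ξ) := by
  rw [Real.fourierInv_eq', testFT]
  congr 1 with x
  rw [rdot_eq_inner, inner_smul_right, smul_eq_mul, mul_comm I]

lemma testFT_eq_fourierInv (φ : R2 → ℂ) (ξ : R2) : testFT φ ξ = 𝓕⁻ φ ((2 * π)⁻¹ • ξ) := by
  rw [fourierInv_eq_testFT, smul_inv_smul₀ Real.two_pi_pos.ne']

lemma exists_schwartzMap_eq_testFT {φ : R2 → ℂ} (hφ : ContDiff ℝ ∞ φ)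
    (hs : HasCompactSupport φ) : ∃ ψ : 𝓢(R2, ℂ), ⇑ψ = testFT φ := by
  refine ⟨SchwartzMap.compCLMOfContinuousLinearEquiv ℂ (ContinuousLinearEquiv.smulLeft
    (Units.mk0 (2 * π)⁻¹ (inv_ne_zero Real.two_pi_pos.ne'))) (𝓕⁻ (hs.toSchwartzMap hφ)), ?_⟩
  ext ξ
  rw [testFT_eq_fourierInv, SchwartzMap.compCLMOfContinuousLinearEquiv_apply,
    SchwartzMap.fourierInv_coe]
  rfl

lemma testFT_translate (φ : R2 → ℂ) (x ξ : R2) :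
    testFT (fun y ↦ φ (y - x)) ξ = cexp (I * rdot x ξ) * testFT φ ξ := by
  rw [testFT, ← integral_add_right_eq_self _ x, testFT, ← integral_const_mul]
  congr 1 with y
  rw [add_sub_cancel_right, rdot_eq_inner, inner_add_left, ← mul_assoc, ← Complex.exp_add,
    rdot_eq_inner, rdot_eq_inner]
  congr 2
  push_cast
  ring

lemma exists_testFT_ne_zero (ξ : R2) :
    ∃ ρ : R2 → ℂ, ContDiff ℝ ∞ ρ ∧ HasCompactSupport ρ ∧ testFT ρ ξ ≠ 0 := by
  let bump : ContDiffBump (0 : R2) := ⟨1, 2, one_pos, one_lt_two⟩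
  refine ⟨fun x ↦ cexp (-(I * rdot x ξ)) * bump x, ?_, ?_, ?_⟩
  · simp only [rdot_eq_inner]
    have phase : ContDiff ℝ ∞ fun x : R2 ↦ ((⟪x, ξ⟫ : ℝ) : ℂ) :=
      Complex.ofRealCLM.contDiff.comp (contDiff_id.inner ℝ contDiff_const)
    exact (contDiff_const.mul phase).neg.cexp.mul
      (Complex.ofRealCLM.contDiff.comp bump.contDiff)
  · exact (bump.hasCompactSupport.comp_left Complex.ofReal_zero).mul_left
  · have : testFT (fun x ↦ cexp (-(I * rdot x ξ)) * bump x) ξ = ((∫ x, bump x : ℝ) : ℂ) := by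
      rw [testFT, ← integral_complex_ofReal]
      congr 1 with x
      rw [← mul_assoc, ← Complex.exp_add, add_neg_cancel, Complex.exp_zero, one_mul]
    rw [this]
    exact Complex.ofReal_ne_zero.2 bump.integral_pos.ne'

end TestFT

namespace HTildeElt

variable {s : ℝ} {Γ : Set R2} (f : HTildeElt s Γ) {ρ : R2 → ℂ}

lemma integrable_ft_mul_testFT (hρ : ContDiff ℝ ∞ ρ) (hs : HasCompactSupport ρ) :
    Integrable fun ξ ↦ f.ft ξ * testFT ρ ξ := by
  obtain ⟨ψ, hψ⟩ := exists_schwartzMap_eq_testFT hρ hs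
  exact hψ ▸ integrable_mul_schwartzMap f.cont.aestronglyMeasurable f.mem ψ

lemma testFT_ft_mul_testFT (ρ : R2 → ℂ) (x : R2) :
    testFT (fun ξ ↦ f.ft ξ * testFT ρ ξ) x = ∫ ξ, f.ft ξ * testFT (fun y ↦ ρ (y - x)) ξ := by
  rw [testFT]
  congr 1 with ξ
  rw [testFT_translate, rdot_eq_inner, real_inner_comm, ← rdot_eq_inner]
  ring

lemma hasCompactSupport_testFT_ft_mul_testFT (hΓ : Bornology.IsBounded Γ)
    (hρ : ContDiff ℝ ∞ ρ) (hs : HasCompactSupport ρ) :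
    HasCompactSupport (testFT fun ξ ↦ f.ft ξ * testFT ρ ξ) := by
  refine .intro ((hΓ.isCompact_closure.prod hs).image continuous_sub) fun x hx ↦ ?_
  rw [testFT_ft_mul_testFT]
  refine f.supp _ (hρ.comp (contDiff_id.sub contDiff_const))
    (hs.comp_homeomorph (Homeomorph.subRight x)) (Set.disjoint_iff_inter_eq_empty.1 ?_)
  refine Set.disjoint_left.2 fun y hy hyΓ ↦ hx ?_
  have hyρ : y - x ∈ tsupport ρ := tsupport_comp_subset_preimage ρ (continuous_sub_right x) hy
  exact ⟨(y, y - x), ⟨hyΓ, hyρ⟩, sub_sub_cancel y x⟩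

open scoped FourierTransform in
lemma ft_eq_zero_of_eventuallyEq_zero (hΓ : Bornology.IsBounded Γ) {ξ₀ : R2}
    (h : f.ft =ᶠ[𝓝 ξ₀] 0) : f.ft = 0 := by
  ext ξ
  obtain ⟨ρ, hρ, hs, hξ⟩ := exists_testFT_ne_zero ξ
  obtain ⟨ψ, hψ⟩ := exists_schwartzMap_eq_testFT hρ hs
  have compact : HasCompactSupport (𝓕⁻ fun η ↦ f.ft η * testFT ρ η) := by
    rw [funext (fourierInv_eq_testFT _)]
    exact (f.hasCompactSupport_testFT_ft_mul_testFT hΓ hρ hs).comp_homeomorph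
      (Homeomorph.smulOfNeZero (2 * π) Real.two_pi_pos.ne')
  have vanish := eq_zero_of_hasCompactSupport_fourierInv (f.cont.mul (hψ ▸ ψ.continuous))
    (f.integrable_ft_mul_testFT hρ hs) compact (h.mono fun η hη ↦ by simp [hη])
  exact (mul_eq_zero.1 (congrFun vanish ξ)).resolve_right hξ

end HTildeElt

lemma locallyIntegrable_abs_sub_rpow {r : ℝ} (hr : -1 < r) (a : ℝ) :
    LocallyIntegrable fun y : ℝ ↦ |y - a| ^ r := by
  have centered : LocallyIntegrable fun y : ℝ ↦ |y| ^ r :=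
    locallyIntegrable_of_norm_le_rpow (C := 1) (α := -r) (by simp) (by simpa using by linarith)
      (.of_forall fun y ↦ by simp [Real.abs_rpow_of_nonneg])
      (Measurable.aestronglyMeasurable (by fun_prop))
  rw [← map_sub_right_eq_self volume a] at centered
  exact (locallyIntegrable_map_homeomorph (Homeomorph.subRight a)).1 centered

section HelmholtzSymbol

variable (k : ℝ)

lemma measurable_g0hat : Measurable (g0hat k) := by
  refine Measurable.ite (measurableSet_lt (by fun_prop) (by fun_prop)) ?_ ?_ <;> fun_prop

lemma norm_g0hat_le (ξ : R2) : ‖g0hat k ξ‖ ≤ (√|‖ξ‖ ^ 2 - k ^ 2|)⁻¹ := by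
  unfold g0hat
  split_ifs with h
  · rw [norm_div, Complex.norm_I, Complex.norm_real, Real.norm_of_nonneg (Real.sqrt_nonneg _),
      one_div, abs_sub_comm,
      abs_of_pos (sub_pos.2 (pow_lt_pow_left₀ h (norm_nonneg _) two_ne_zero))]
  · rw [norm_div, norm_one, Complex.norm_real, Real.norm_of_nonneg (Real.sqrt_nonneg _), one_div]
    rcases le_or_gt (‖ξ‖ ^ 2 - k ^ 2) 0 with h0 | h0
    · simp [Real.sqrt_eq_zero_of_nonpos h0]
    · rw [abs_of_pos h0]

/-- In polar coordinates the Jacobian `y` absorbs the factor `y + |k|` of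
`y² - k² = (y - |k|)(y + |k|)`, leaving the integrable singularity `|y - |k||^{-1/2}`. -/
lemma mul_inv_sqrt_abs_sq_sub_sq_le {y r : ℝ} (hy : 0 < y) (hyr : y ≤ r) :
    y * (√|y ^ 2 - k ^ 2|)⁻¹ ≤ √r * |(y - |k|)| ^ (-(1 / 2) : ℝ) := by
  have factor : √|y ^ 2 - k ^ 2| = √(y + |k|) * √|(y - |k|)| := by
    rw [← Real.sqrt_mul (by positivity), ← sq_abs k, sq_sub_sq, abs_mul,
      abs_of_pos (by positivity : 0 < y + |k|)]
  rw [factor, mul_inv, Real.rpow_neg (abs_nonneg _), ← Real.sqrt_eq_rpow, ← mul_assoc]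
  gcongr
  calc y * (√(y + |k|))⁻¹ ≤ y * (√y)⁻¹ := by gcongr; exact le_add_of_nonneg_right (abs_nonneg k)
    _ = √y := by rw [← div_eq_mul_inv, Real.div_sqrt]
    _ ≤ √r := Real.sqrt_le_sqrt hyr

lemma locallyIntegrable_g0hat : LocallyIntegrable (g0hat k) := by
  refine locallyIntegrable_iff.2 fun K hK ↦ ?_
  obtain ⟨r, hKr⟩ := hK.isBounded.subset_ball 0
  suffices radial : IntegrableOn (fun ξ : R2 ↦ (√|‖ξ‖ ^ 2 - k ^ 2|)⁻¹) (Metric.ball 0 r) from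
    (radial.mono_set hKr).mono' (measurable_g0hat k).aestronglyMeasurable
      (.of_forall (norm_g0hat_le k))
  rw [integrableOn_fun_norm_addHaar volume (f := fun y : ℝ ↦ (√|y ^ 2 - k ^ 2|)⁻¹)]
  have singular : IntegrableOn (fun y : ℝ ↦ √r * |(y - |k|)| ^ (-(1 / 2) : ℝ)) (Set.Ioo 0 r) :=
    (((locallyIntegrable_abs_sub_rpow (by norm_num) |k|).integrableOn_isCompact
      isCompact_Icc).mono_set Set.Ioo_subset_Icc_self).const_mul _
  refine singular.mono' (Measurable.aestronglyMeasurable (by fun_prop))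
    (ae_restrict_of_forall_mem measurableSet_Ioo fun y hy ↦ ?_)
  rw [finrank_euclideanSpace_fin, Nat.add_one_sub_one, pow_one, smul_eq_mul,
    Real.norm_of_nonneg (mul_nonneg hy.1.le (by positivity))]
  exact mul_inv_sqrt_abs_sq_sub_sq_le k hy.1 hy.2.le

lemma g0hat_isBigO_cocompact :
    g0hat k =O[cocompact R2] fun ξ ↦ (1 + ‖ξ‖ ^ 2) ^ (-(1 / 2) : ℝ) := by
  have large : ∀ᶠ ξ in cocompact R2, 1 + 2 * k ^ 2 ≤ ‖ξ‖ ^ 2 :=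
    ((tendsto_pow_atTop two_ne_zero).comp tendsto_norm_cocompact_atTop).eventually_ge_atTop _
  refine Asymptotics.IsBigO.of_bound √2 (large.mono fun ξ hξ ↦ ?_)
  have half_le : (1 + ‖ξ‖ ^ 2) / 2 ≤ |‖ξ‖ ^ 2 - k ^ 2| := le_abs.2 (.inl (by linarith))
  calc ‖g0hat k ξ‖ ≤ (√|‖ξ‖ ^ 2 - k ^ 2|)⁻¹ := norm_g0hat_le k ξ
    _ ≤ (√((1 + ‖ξ‖ ^ 2) / 2))⁻¹ := by gcongr
    _ = √2 * ‖(1 + ‖ξ‖ ^ 2) ^ (-(1 / 2) : ℝ)‖ := by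
      rw [Real.sqrt_div (by positivity), inv_div, Real.norm_of_nonneg (by positivity),
        Real.rpow_neg (by positivity), ← Real.sqrt_eq_rpow, div_eq_mul_inv]

lemma integrable_g0hat_mul {φ : R2 → ℂ} (hφ : Continuous φ)
    (hi : Integrable fun ξ ↦ (1 + ‖ξ‖ ^ 2) ^ (-(1 / 2) : ℝ) * ‖φ ξ‖) :
    Integrable fun ξ ↦ g0hat k ξ * φ ξ := by
  have loc : LocallyIntegrable fun ξ ↦ g0hat k ξ * φ ξ := locallyIntegrable_iff.2 fun K hK ↦
    ((locallyIntegrable_g0hat k).integrableOn_isCompact hK).mul_continuousOn hφ.continuousOn hK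
  exact loc.integrable_of_isBigO_cocompact
    ((g0hat_isBigO_cocompact k).mul (Asymptotics.isBigO_refl φ _).norm_right)
    (hi.integrableAtFilter _)

variable {k}

lemma im_g0hat_of_lt {ξ : R2} (h : ‖ξ‖ < k) :
    (g0hat k ξ).im = (√(k ^ 2 - ‖ξ‖ ^ 2))⁻¹ := by
  rw [g0hat, if_pos h, Complex.div_ofReal_im, Complex.I_im, one_div]

lemma im_g0hat_of_le {ξ : R2} (h : k ≤ ‖ξ‖) : (g0hat k ξ).im = 0 := by
  rw [g0hat, if_neg h.not_gt, Complex.div_ofReal_im, Complex.one_im, zero_div]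

end HelmholtzSymbol

section DiagonalForm

variable (k : ℝ) (F1 F2 : R2 → ℂ) (ξ : R2)

lemma norm_dotFt_sq_add_norm_curlFt_sq :
    ‖dotFt F1 F2 ξ‖ ^ 2 + ‖curlFt F1 F2 ξ‖ ^ 2 = ‖ξ‖ ^ 2 * (‖F1 ξ‖ ^ 2 + ‖F2 ξ‖ ^ 2) := by
  rw [EuclideanSpace.real_norm_sq_eq, Fin.sum_univ_two]
  simp only [← Complex.normSq_eq_norm_sq, Complex.normSq_apply, dotFt, curlFt, Complex.add_re,
    Complex.add_im, Complex.sub_re, Complex.sub_im, Complex.re_ofReal_mul, Complex.im_ofReal_mul]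
  ring

/-- The real factor `|ξ·F|² - k²|F|²` of `B(W,W)` next to `ĝ₀`. As
`|ξ·F|² + |ξ⊥·F|² = |ξ|²|F|²`, it is the bracket in the definition of `B` on the diagonal,
with the division by `|ξ|²` carried out. -/
def diagonalSymbol : ℝ := ‖dotFt F1 F2 ξ‖ ^ 2 - k ^ 2 * (‖F1 ξ‖ ^ 2 + ‖F2 ξ‖ ^ 2)

lemma diagonalSymbol_le :
    diagonalSymbol k F1 F2 ξ ≤ -((k ^ 2 - ‖ξ‖ ^ 2) * (‖F1 ξ‖ ^ 2 + ‖F2 ξ‖ ^ 2)) := by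
  rw [diagonalSymbol]
  linarith [norm_dotFt_sq_add_norm_curlFt_sq F1 F2 ξ, sq_nonneg ‖curlFt F1 F2 ξ‖]

variable {F1 F2 ξ}

lemma continuous_diagonalSymbol (h1 : Continuous F1) (h2 : Continuous F2) :
    Continuous (diagonalSymbol k F1 F2) := by
  unfold diagonalSymbol dotFt
  fun_prop

lemma Bintegrand_self (hξ : ξ ≠ 0) :
    Bintegrand k F1 F2 F1 F2 ξ = g0hat k ξ * diagonalSymbol k F1 F2 ξ := by
  have bracket : (‖ξ‖ ^ 2 - k ^ 2) * ‖dotFt F1 F2 ξ‖ ^ 2 - k ^ 2 * ‖curlFt F1 F2 ξ‖ ^ 2 =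
      diagonalSymbol k F1 F2 ξ * ‖ξ‖ ^ 2 := by
    rw [diagonalSymbol]
    linear_combination -k ^ 2 * norm_dotFt_sq_add_norm_curlFt_sq F1 F2 ξ
  have norm_ne : ((‖ξ‖ ^ 2 : ℝ) : ℂ) ≠ 0 :=
    Complex.ofReal_ne_zero.2 (pow_ne_zero 2 (norm_ne_zero_iff.2 hξ))
  rw [Bintegrand, Complex.mul_conj, Complex.mul_conj, Complex.normSq_eq_norm_sq,
    Complex.normSq_eq_norm_sq, mul_div_assoc]
  congr 1
  rw [div_eq_iff norm_ne]
  exact_mod_cast bracket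

variable {k}

lemma im_Bintegrand_self_le (hξ : ξ ≠ 0) (h : ‖ξ‖ < k) :
    (Bintegrand k F1 F2 F1 F2 ξ).im ≤ -(√(k ^ 2 - ‖ξ‖ ^ 2) * (‖F1 ξ‖ ^ 2 + ‖F2 ξ‖ ^ 2)) := by
  rw [Bintegrand_self k hξ, Complex.im_mul_ofReal, im_g0hat_of_lt h, inv_mul_eq_div]
  have gap_pos : 0 < k ^ 2 - ‖ξ‖ ^ 2 :=
    sub_pos.2 (pow_lt_pow_left₀ h (norm_nonneg _) two_ne_zero)
  rw [div_le_iff₀ (Real.sqrt_pos.2 gap_pos)]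
  calc diagonalSymbol k F1 F2 ξ
      ≤ -((k ^ 2 - ‖ξ‖ ^ 2) * (‖F1 ξ‖ ^ 2 + ‖F2 ξ‖ ^ 2)) := diagonalSymbol_le k F1 F2 ξ
    _ = -(√(k ^ 2 - ‖ξ‖ ^ 2) * (‖F1 ξ‖ ^ 2 + ‖F2 ξ‖ ^ 2)) * √(k ^ 2 - ‖ξ‖ ^ 2) := by
      nth_rw 1 [← Real.mul_self_sqrt gap_pos.le]
      ring

lemma im_Bintegrand_self_nonpos (hξ : ξ ≠ 0) : (Bintegrand k F1 F2 F1 F2 ξ).im ≤ 0 := by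
  rcases lt_or_ge ‖ξ‖ k with h | h
  · exact (im_Bintegrand_self_le hξ h).trans (neg_nonpos.2 (by positivity))
  · rw [Bintegrand_self k hξ, Complex.im_mul_ofReal, im_g0hat_of_le h, zero_mul]

lemma eq_zero_of_im_Bintegrand_self_eq_zero (hξ : ξ ≠ 0) (h : ‖ξ‖ < k)
    (him : (Bintegrand k F1 F2 F1 F2 ξ).im = 0) : F1 ξ = 0 ∧ F2 ξ = 0 := by
  have gap_pos : 0 < √(k ^ 2 - ‖ξ‖ ^ 2) :=
    Real.sqrt_pos.2 (sub_pos.2 (pow_lt_pow_left₀ h (norm_nonneg _) two_ne_zero))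
  have energy_nonpos : ‖F1 ξ‖ ^ 2 + ‖F2 ξ‖ ^ 2 ≤ 0 :=
    nonpos_of_mul_nonpos_right (neg_nonneg.1 (him ▸ im_Bintegrand_self_le hξ h)) gap_pos
  constructor <;> rw [← norm_eq_zero, ← sq_eq_zero_iff] <;>
    linarith [sq_nonneg ‖F1 ξ‖, sq_nonneg ‖F2 ξ‖]

end DiagonalForm

namespace Xelt

variable {Γ : Set R2} (W : Xelt Γ)

lemma integrable_Bintegrand_self (k : ℝ) :
    Integrable (Bintegrand k W.c1.ft W.c2.ft W.c1.ft W.c2.ft) := by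
  have weighted : Integrable fun ξ ↦
      (1 + ‖ξ‖ ^ 2) ^ (-(1 / 2) : ℝ) * ‖(diagonalSymbol k W.c1.ft W.c2.ft ξ : ℂ)‖ := by
    refine (W.divMem.sub ((W.c1.mem.add W.c2.mem).const_mul (k ^ 2))).norm.congr
      (.of_forall fun ξ ↦ ?_)
    have weight_nonneg : 0 ≤ (1 + ‖ξ‖ ^ 2) ^ (-(1 / 2) : ℝ) := by positivity
    simp only [Pi.sub_apply, Pi.add_apply, Complex.norm_real]
    rw [← Real.norm_of_nonneg weight_nonneg, ← norm_mul, Real.norm_of_nonneg weight_nonneg,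
      diagonalSymbol]
    congr 1
    ring
  refine (integrable_g0hat_mul k (Complex.continuous_ofReal.comp
    (continuous_diagonalSymbol k W.c1.cont W.c2.cont)) weighted).congr ?_
  filter_upwards [Measure.ae_ne volume 0] with ξ hξ using (Bintegrand_self k hξ).symm

lemma ft_eq_zero_of_im_Bform_eq_zero {k : ℝ} (h : (Bform k W W).im = 0) {ξ : R2}
    (hξ : ‖ξ‖ < k) : W.c1.ft ξ = 0 ∧ W.c2.ft ξ = 0 := by
  have integrand_im_zero :
      ∀ᵐ ξ, (Bintegrand k W.c1.ft W.c2.ft W.c1.ft W.c2.ft ξ).im = 0 := by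
    have integrable := W.integrable_Bintegrand_self k
    have nonneg : ∀ᵐ ξ, 0 ≤ -(Bintegrand k W.c1.ft W.c2.ft W.c1.ft W.c2.ft ξ).im := by
      filter_upwards [Measure.ae_ne volume 0] with ξ hξ
        using neg_nonneg.2 (im_Bintegrand_self_nonpos hξ)
    have integral_zero : ∫ ξ, -(Bintegrand k W.c1.ft W.c2.ft W.c1.ft W.c2.ft ξ).im = 0 := by
      rw [integral_neg, neg_eq_zero]
      exact (integral_im integrable).trans h
    filter_upwards [(integral_eq_zero_iff_of_nonneg_ae nonneg integrable.im.neg).1 integral_zero]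
      with ξ hξ using neg_eq_zero.1 hξ
  have ae_zero : (fun ξ ↦ (W.c1.ft ξ, W.c2.ft ξ)) =ᵐ[volume.restrict (Metric.ball 0 k)] 0 := by
    filter_upwards [ae_restrict_of_ae integrand_im_zero, ae_restrict_of_ae (Measure.ae_ne volume 0),
      ae_restrict_mem Metric.isOpen_ball.measurableSet] with ξ him hξ hξk
    exact Prod.ext_iff.2
      (eq_zero_of_im_Bintegrand_self_eq_zero hξ (mem_ball_zero_iff.1 hξk) him)
  exact Prod.ext_iff.1 (Measure.eqOn_open_of_ae_eq ae_zero Metric.isOpen_ball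
    (W.c1.cont.prodMk W.c2.cont).continuousOn continuousOn_const (mem_ball_zero_iff.2 hξ))

end Xelt

theorem statement10_general (Γ : Set R2) (hΓ : Bornology.IsBounded Γ) (k : ℝ) (hk : 0 < k)
    (W : Xelt Γ) (h : (Bform k W W).im = 0) :
    ∀ ξ : R2, W.c1.ft ξ = 0 ∧ W.c2.ft ξ = 0 := by
  have near_zero : ∀ᶠ ξ in 𝓝 (0 : R2), W.c1.ft ξ = 0 ∧ W.c2.ft ξ = 0 := by
    filter_upwards [Metric.ball_mem_nhds 0 hk] with ξ hξ
      using W.ft_eq_zero_of_im_Bform_eq_zero h (mem_ball_zero_iff.1 hξ)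
  have c1_zero := W.c1.ft_eq_zero_of_eventuallyEq_zero hΓ (near_zero.mono fun _ ↦ And.left)
  have c2_zero := W.c2.ft_eq_zero_of_eventuallyEq_zero hΓ (near_zero.mono fun _ ↦ And.right)
  exact fun ξ ↦ ⟨congrFun c1_zero ξ, congrFun c2_zero ξ⟩

/-- Proposition 3.6: if `W ∈ X` satisfies `B(W,W) = 0` then `W = 0`. -/
theorem statement10 (Γ : Set R2) (hΓ : IsLipschitzDomain Γ) (k : ℝ) (hk : 0 < k)
    (W : Xelt Γ) (h : Bform k W W = 0) :
    ∀ ξ : R2, W.c1.ft ξ = 0 ∧ W.c2.ft ξ = 0 :=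
  statement10_general Γ hΓ.2.1 k hk W (h ▸ Complex.zero_im)

end
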